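/- Fix ξ̃ = (ξ₁,ξ₂) ∈ ℝ² with ξ̃ ≠ 0, and for z ∈ ℂ write ξ(z) := (ξ₁, ξ₂, z) ∈ ℂ³. Define z_μ := −(μ₃₁ξ₁ + μ₃₂ξ₂)/μ₃₃ + i·√(ξ̃ᵀ μ̃ ξ̃)/√(μ₃₃), where μ̃ is the 2×2 matrix with entries μ̃_{ij} = μ_{ij} − μ_{3i}μ_{3j}/μ₃₃ (i,j ∈ {1,2}), and define z_ε analogously with ε in place of μ. Then the set of z ∈ ℂ with Im z > 0 and det M(ξ(z)) = 0 is exactly {z_μ, z_ε}; moreover z_μ is a root of z ↦ ξ(z)ᵀμξ(z) and z_ε is a root of z ↦ ξ(z)ᵀεξ(z). -/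

import Mathlib

open Matrix

/-- The principal symbol `M_H(ξ)`: `M(ξ) = α (ε⁻¹μξ)(μξ)ᵀ + (ξᵀεξ) I − ξ(εξ)ᵀ`,
with `α = √(det ε / det μ)`. -/
noncomputable def MH (ε μ : Matrix (Fin 3) (Fin 3) ℝ) (ξ : Fin 3 → ℂ) :
    Matrix (Fin 3) (Fin 3) ℂ :=
  (Real.sqrt (ε.det / μ.det) : ℂ) •
      vecMulVec (((ε.map Complex.ofReal)⁻¹ * μ.map Complex.ofReal).mulVec ξ)
        ((μ.map Complex.ofReal).mulVec ξ)
    + (ξ ⬝ᵥ (ε.map Complex.ofReal).mulVec ξ) • (1 : Matrix (Fin 3) (Fin 3) ℂ)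
    - vecMulVec ξ ((ε.map Complex.ofReal).mulVec ξ)

/-- The tangential Schur complement `Ã_{ij} = A_{ij} − A_{3i} A_{3j} / A₃₃`
(indices `i, j ∈ {1,2}`; here `3` is the index `2 : Fin 3`). -/
noncomputable def schur (A : Matrix (Fin 3) (Fin 3) ℝ) : Matrix (Fin 2) (Fin 2) ℝ :=
  Matrix.of fun i j => A i.castSucc j.castSucc - A 2 i.castSucc * A 2 j.castSucc / A 2 2

/-- The complex covector `ξ(z) = (ξ₁, ξ₂, z)`. -/
noncomputable def cvec (ξt : Fin 2 → ℝ) (z : ℂ) : Fin 3 → ℂ :=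
  ![(ξt 0 : ℂ), (ξt 1 : ℂ), z]

/-- The root `z_A = −(A₃₁ξ₁ + A₃₂ξ₂)/A₃₃ + i √(ξ̃ᵀÃξ̃)/√(A₃₃)` with positive
imaginary part of `z ↦ ξ(z)ᵀ A ξ(z)`. -/
noncomputable def zRoot (A : Matrix (Fin 3) (Fin 3) ℝ) (ξt : Fin 2 → ℝ) : ℂ :=
  (Complex.ofReal (-(A 2 0 * ξt 0 + A 2 1 * ξt 1) / A 2 2))
    + Complex.I * Complex.ofReal
        (Real.sqrt (ξt ⬝ᵥ (schur A).mulVec ξt) / Real.sqrt (A 2 2))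

/-- Determinant of a rank-two perturbation of a multiple of the identity. -/
theorem det_aux (c a : ℂ) (u v x w : Fin 3 → ℂ) :
    (c • vecMulVec u v + a • (1 : Matrix (Fin 3) (Fin 3) ℂ) - vecMulVec x w).det
      = a * ((a + c * (v ⬝ᵥ u)) * (a - w ⬝ᵥ x) + c * (v ⬝ᵥ x) * (w ⬝ᵥ u)) := by
  simp [det_fin_three, vecMulVec_apply, dotProduct, Fin.sum_univ_three]
  ring

theorem det_MH (ε μ : Matrix (Fin 3) (Fin 3) ℝ) (hε : ε.PosDef) (ξ : Fin 3 → ℂ) :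
    (MH ε μ ξ).det = (Real.sqrt (ε.det / μ.det) : ℂ)
      * (ξ ⬝ᵥ (ε.map Complex.ofReal).mulVec ξ)
      * (ξ ⬝ᵥ (μ.map Complex.ofReal).mulVec ξ) ^ 2 := by
  have hdet : IsUnit (ε.map Complex.ofReal).det := by
    have h1 : (ε.map Complex.ofReal).det = ((ε.det : ℝ) : ℂ) :=
      (RingHom.map_det Complex.ofRealHom ε).symm
    rw [h1, isUnit_iff_ne_zero]
    exact_mod_cast hε.det_pos.ne'
  have hsym : (ε.map Complex.ofReal)ᵀ = ε.map Complex.ofReal := by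
    ext i j
    have := hε.isHermitian.apply i j
    simp at this
    simp [this]
  have hwu : (ε.map Complex.ofReal).mulVec ξ ⬝ᵥ
      ((ε.map Complex.ofReal)⁻¹ * μ.map Complex.ofReal).mulVec ξ
      = ξ ⬝ᵥ (μ.map Complex.ofReal).mulVec ξ := by
    conv_lhs => rw [← hsym, mulVec_transpose, ← dotProduct_mulVec, mulVec_mulVec]
    rw [hsym, ← Matrix.mul_assoc, Matrix.mul_nonsing_inv _ hdet, Matrix.one_mul]
  unfold MH
  rw [det_aux, hwu, dotProduct_comm _ ξ, dotProduct_comm _ ξ]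
  ring

theorem schur_pos (A : Matrix (Fin 3) (Fin 3) ℝ) (hA : A.PosDef) (x : Fin 2 → ℝ) (hx : x ≠ 0) :
    0 < x ⬝ᵥ (schur A).mulVec x := by
  have h22 : 0 < A 2 2 := hA.diag_pos
  have hs : ∀ i j, A i j = A j i := fun i j => by
    simpa using hA.isHermitian.apply j i
  have hne : (![x 0, x 1, -(A 2 0 * x 0 + A 2 1 * x 1) / A 2 2] : Fin 3 → ℝ) ≠ 0 := by
    intro h
    apply hx
    ext i
    fin_cases i
    · simpa using congrFun h 0
    · simpa using congrFun h 1
  have h := hA.dotProduct_mulVec_pos hne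
  refine lt_of_lt_of_eq h ?_
  simp [dotProduct, mulVec, schur, Fin.sum_univ_three, Fin.sum_univ_two]
  rw [hs 0 2, hs 1 2]
  field_simp
  ring

theorem zRoot_im (A : Matrix (Fin 3) (Fin 3) ℝ) (hA : A.PosDef) (x : Fin 2 → ℝ) (hx : x ≠ 0) :
    0 < (zRoot A x).im := by
  have h22 : 0 < A 2 2 := hA.diag_pos
  have h : (zRoot A x).im = Real.sqrt (x ⬝ᵥ (schur A).mulVec x) / Real.sqrt (A 2 2) := by
    unfold zRoot
    rw [Complex.add_im, Complex.ofReal_im, Complex.I_mul_im, Complex.ofReal_re, zero_add]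
  rw [h]
  exact div_pos (Real.sqrt_pos.2 (schur_pos A hA x hx)) (Real.sqrt_pos.2 h22)

theorem quad_factor (A : Matrix (Fin 3) (Fin 3) ℝ) (hA : A.PosDef) (x : Fin 2 → ℝ)
    (hx : x ≠ 0) (z : ℂ) :
    cvec x z ⬝ᵥ (A.map Complex.ofReal).mulVec (cvec x z)
      = (A 2 2 : ℂ) * (z - zRoot A x) * (z - (starRingEnd ℂ) (zRoot A x)) := by
  have h22 : 0 < A 2 2 := hA.diag_pos
  have hs : ∀ i j, A i j = A j i := fun i j => by
    simpa using hA.isHermitian.apply j i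
  have hp := schur_pos A hA x hx
  set r := Real.sqrt (x ⬝ᵥ (schur A).mulVec x) / Real.sqrt (A 2 2) with hr
  have hz : zRoot A x = ((-(A 2 0 * x 0 + A 2 1 * x 1) / A 2 2 : ℝ) : ℂ) + Complex.I * (r : ℂ) :=
    rfl
  have hr2 : r ^ 2 * A 2 2 = x ⬝ᵥ (schur A).mulVec x := by
    rw [hr, div_pow, Real.sq_sqrt hp.le, Real.sq_sqrt h22.le]
    field_simp
  have hr3 : r ^ 2 * A 2 2 = A 0 0 * x 0 ^ 2 + 2 * A 1 0 * x 0 * x 1 + A 1 1 * x 1 ^ 2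
      - (A 2 0 * x 0 + A 2 1 * x 1) ^ 2 / A 2 2 := by
    rw [hr2]
    simp [dotProduct, mulVec, schur, Fin.sum_univ_two]
    rw [hs 0 1]
    field_simp
    ring
  have hr4 : (r : ℂ) ^ 2 * A 2 2 = A 0 0 * x 0 ^ 2 + 2 * A 1 0 * x 0 * x 1 + A 1 1 * x 1 ^ 2
      - (A 2 0 * x 0 + A 2 1 * x 1) ^ 2 / A 2 2 := by
    exact_mod_cast congrArg Complex.ofReal hr3
  have h22c : (A 2 2 : ℂ) ≠ 0 := by exact_mod_cast h22.ne'
  have e : (A 2 2 : ℂ) * (z - zRoot A x) * (z - (starRingEnd ℂ) (zRoot A x))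
      = A 2 2 * (z + (A 2 0 * x 0 + A 2 1 * x 1) / A 2 2) ^ 2 + (r : ℂ) ^ 2 * A 2 2 := by
    rw [hz]
    simp only [map_add, map_mul, Complex.conj_ofReal, Complex.conj_I]
    push_cast
    linear_combination (-(A 2 2 : ℂ) * r ^ 2) * Complex.I_sq
  rw [e, hr4]
  simp [dotProduct, mulVec, cvec, Fin.sum_univ_three]
  rw [hs 0 2, hs 1 2, hs 0 1]
  field_simp
  ring

theorem quad_root_iff (A : Matrix (Fin 3) (Fin 3) ℝ) (hA : A.PosDef) (x : Fin 2 → ℝ)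
    (hx : x ≠ 0) (z : ℂ) (hz : 0 < z.im) :
    cvec x z ⬝ᵥ (A.map Complex.ofReal).mulVec (cvec x z) = 0 ↔ z = zRoot A x := by
  have h22 : 0 < A 2 2 := hA.diag_pos
  have h22c : (A 2 2 : ℂ) ≠ 0 := by exact_mod_cast h22.ne'
  have him := zRoot_im A hA x hx
  have hne : z - (starRingEnd ℂ) (zRoot A x) ≠ 0 := by
    intro h
    have := congrArg Complex.im h
    simp at this
    linarith
  rw [quad_factor A hA x hx]
  simp [h22c, hne, sub_eq_zero]

/-- For fixed nonzero `ξ̃ ∈ ℝ²`, the set of `z` in the upper half plane with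
`det M(ξ(z)) = 0` is exactly `{z_μ, z_ε}`, and `z_μ`, `z_ε` are roots of
`z ↦ ξ(z)ᵀμξ(z)` and `z ↦ ξ(z)ᵀεξ(z)` respectively. -/
theorem upper_roots_of_det_MH (ε μ : Matrix (Fin 3) (Fin 3) ℝ) (hε : ε.PosDef)
    (hμ : μ.PosDef) (ξt : Fin 2 → ℝ) (hξ : ξt ≠ 0) :
    {z : ℂ | 0 < z.im ∧ (MH ε μ (cvec ξt z)).det = 0} = {zRoot μ ξt, zRoot ε ξt}
      ∧ cvec ξt (zRoot μ ξt) ⬝ᵥ (μ.map Complex.ofReal).mulVec (cvec ξt (zRoot μ ξt)) = 0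
      ∧ cvec ξt (zRoot ε ξt) ⬝ᵥ (ε.map Complex.ofReal).mulVec (cvec ξt (zRoot ε ξt)) = 0 := by
  have hα : (Real.sqrt (ε.det / μ.det) : ℂ) ≠ 0 := by
    exact_mod_cast (Real.sqrt_pos.2 (div_pos hε.det_pos hμ.det_pos)).ne'
  have hzμ := zRoot_im μ hμ ξt hξ
  have hzε := zRoot_im ε hε ξt hξ
  refine ⟨?_, (quad_root_iff μ hμ ξt hξ _ hzμ).2 rfl, (quad_root_iff ε hε ξt hξ _ hzε).2 rfl⟩
  ext z
  simp only [Set.mem_ofPred_eq, Set.mem_insert_iff, Set.mem_singleton_iff]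
  have key : 0 < z.im → ((MH ε μ (cvec ξt z)).det = 0 ↔ z = zRoot μ ξt ∨ z = zRoot ε ξt) := by
    intro hz
    rw [det_MH ε μ hε, mul_eq_zero, mul_eq_zero, pow_eq_zero_iff two_ne_zero,
      quad_root_iff μ hμ ξt hξ z hz, quad_root_iff ε hε ξt hξ z hz]
    tauto
  constructor
  · rintro ⟨hz, h⟩
    exact (key hz).1 h
  · intro h
    have hz : 0 < z.im := by
      rcases h with h | h <;> rw [h] <;> assumption
    exact ⟨hz, (key hz).2 h⟩
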